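/- Let p and q be continuously differentiable, strictly positive probability densities on ℝⁿ, and let g: ℝⁿ → ℝⁿ be continuously differentiable with q(x)·g(x) → 0 as ‖x‖ → ∞ and ∇·(q g) Lebesgue-integrable on ℝⁿ. If ∫ q‖g‖₂² < ∞ and F(q‖p) := ∫ q(x)‖∇ log q(x) − ∇ log p(x)‖₂² dx < ∞, then |E_{q(x)}[(S_p g)(x)]| ≤ √(∫ q(x)‖g(x)‖₂² dx) · √(F(q‖p)). -/

import Mathlib

open MeasureTheory Filter Topology
open scoped RealInnerProductSpace

/-- The divergence `∇·f` of a vector field `f : ℝⁿ → ℝⁿ`, i.e. the trace of its Jacobian. -/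
noncomputable def vdiv {n : ℕ} (f : EuclideanSpace ℝ (Fin n) → EuclideanSpace ℝ (Fin n))
    (x : EuclideanSpace ℝ (Fin n)) : ℝ :=
  LinearMap.trace ℝ (EuclideanSpace ℝ (Fin n)) (fderiv ℝ f x).toLinearMap

/-- The Stein operator `(S_p g)(x) = ⟨∇ log p(x), g(x)⟩ + tr(Dg(x))`. -/
noncomputable def steinOp {n : ℕ} (p : EuclideanSpace ℝ (Fin n) → ℝ)
    (g : EuclideanSpace ℝ (Fin n) → EuclideanSpace ℝ (Fin n))
    (x : EuclideanSpace ℝ (Fin n)) : ℝ :=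
  ⟪gradient (fun y => Real.log (p y)) x, g x⟫ + vdiv g x

theorem vdiv_eq_sum {n : ℕ} {F : EuclideanSpace ℝ (Fin n) → EuclideanSpace ℝ (Fin n)}
    (hF : ContDiff ℝ 1 F) (x : EuclideanSpace ℝ (Fin n)) :
    vdiv F x = ∑ i, fderiv ℝ (fun y => F y i) x (EuclideanSpace.basisFun (Fin n) ℝ i) := by
  unfold vdiv
  rw [LinearMap.trace_eq_sum_inner _ (EuclideanSpace.basisFun (Fin n) ℝ)]
  refine Finset.sum_congr rfl fun i _ => ?_
  have h1 : HasFDerivAt (fun y => F y i)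
      ((EuclideanSpace.proj i : EuclideanSpace ℝ (Fin n) →L[ℝ] ℝ).comp (fderiv ℝ F x)) x :=
    (EuclideanSpace.proj i : EuclideanSpace ℝ (Fin n) →L[ℝ] ℝ).hasFDerivAt.comp x
      ((hF.differentiable one_ne_zero x).hasFDerivAt)
  rw [h1.fderiv]
  simp [EuclideanSpace.inner_single_left]

theorem integral_cutoff_vdiv {n : ℕ} {F : EuclideanSpace ℝ (Fin n) → EuclideanSpace ℝ (Fin n)}
    (hF : ContDiff ℝ 1 F) {c : EuclideanSpace ℝ (Fin n) → ℝ} (hc : ContDiff ℝ 1 c)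
    (hcs : HasCompactSupport c) :
    ∫ x, c x * vdiv F x = - ∫ x, fderiv ℝ c x (F x) := by
  have hFi : ∀ i, ContDiff ℝ 1 (fun y => F y i) := fun i =>
    (EuclideanSpace.proj i : EuclideanSpace ℝ (Fin n) →L[ℝ] ℝ).contDiff.comp hF
  have hcont : ∀ i, Continuous (fun x => fderiv ℝ (fun y => F y i) x
      (EuclideanSpace.basisFun (Fin n) ℝ i)) := fun i =>
    ((hFi i).continuous_fderiv one_ne_zero).clm_apply continuous_const
  have hcont' : ∀ i, Continuous (fun x => fderiv ℝ c x
      (EuclideanSpace.basisFun (Fin n) ℝ i)) := fun i =>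
    (hc.continuous_fderiv one_ne_zero).clm_apply continuous_const
  have I1 : ∀ i, Integrable (fun x => c x * fderiv ℝ (fun y => F y i) x
      (EuclideanSpace.basisFun (Fin n) ℝ i)) := fun i =>
    (hc.continuous.mul (hcont i)).integrable_of_hasCompactSupport hcs.mul_right
  have I2 : ∀ i, Integrable (fun x => fderiv ℝ c x
      (EuclideanSpace.basisFun (Fin n) ℝ i) * F x i) := fun i =>
    ((hcont' i).mul (hFi i).continuous).integrable_of_hasCompactSupport
      ((hcs.fderiv_apply (𝕜 := ℝ) _).mul_right)
  have I3 : ∀ i, Integrable (fun x => c x * F x i) := fun i =>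
    (hc.continuous.mul (hFi i).continuous).integrable_of_hasCompactSupport hcs.mul_right
  have e1 : ∀ x, c x * vdiv F x = ∑ i, c x * fderiv ℝ (fun y => F y i) x
      (EuclideanSpace.basisFun (Fin n) ℝ i) := fun x => by
    rw [vdiv_eq_sum hF, Finset.mul_sum]
  have e2 : ∀ x, fderiv ℝ c x (F x) = ∑ i, fderiv ℝ c x
      (EuclideanSpace.basisFun (Fin n) ℝ i) * F x i := fun x => by
    conv_lhs => rw [← (EuclideanSpace.basisFun (Fin n) ℝ).sum_repr (F x)]
    rw [map_sum]
    refine Finset.sum_congr rfl fun i _ => ?_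
    rw [map_smul, smul_eq_mul, mul_comm]
    simp
  simp_rw [e1, e2]
  rw [integral_finsetSum _ fun i _ => I1 i, integral_finsetSum _ fun i _ => I2 i,
    ← Finset.sum_neg_distrib]
  refine Finset.sum_congr rfl fun i _ => ?_
  exact integral_mul_fderiv_eq_neg_fderiv_mul_of_integrable (I2 i) (I1 i) (I3 i)
    (fun x _ => hc.differentiable one_ne_zero x)
    (fun x _ => (hFi i).differentiable one_ne_zero x)

theorem integral_vdiv_eq_zero {n : ℕ} {F : EuclideanSpace ℝ (Fin n) → EuclideanSpace ℝ (Fin n)}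
    (hF : ContDiff ℝ 1 F) (hFint : Integrable F) (hdiv : Integrable (vdiv F)) :
    ∫ x, vdiv F x = 0 := by
  let b : ContDiffBump (0 : EuclideanSpace ℝ (Fin n)) := ⟨1, 2, one_pos, one_lt_two⟩
  have hb : ContDiff ℝ 1 b := b.contDiff
  have hb0 : b 0 = 1 := b.one_of_mem_closedBall (by simp [b])
  obtain ⟨C, hC⟩ := (hb.continuous_fderiv one_ne_zero).bounded_above_of_compact_support
    (b.hasCompactSupport.fderiv (𝕜 := ℝ))
  let r : ℕ → ℝ := fun k => 1 / ((k : ℝ) + 1)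
  have hr0 : ∀ k, r k ≠ 0 := fun k => by positivity
  have hr : Tendsto r atTop (𝓝 0) := tendsto_one_div_add_atTop_nhds_zero_nat
  have hr1 : ∀ k, ‖r k‖ ≤ 1 := fun k => by
    rw [Real.norm_of_nonneg (by positivity)]
    exact (div_le_one (by positivity)).2 (by linarith [(Nat.cast_nonneg k : (0:ℝ) ≤ k)])
  have hC0 : 0 ≤ C := (norm_nonneg _).trans (hC 0)
  have key : ∀ k, ∫ x, b (r k • x) * vdiv F x = - ∫ x, r k * fderiv ℝ b (r k • x) (F x) := by
    intro k
    have := integral_cutoff_vdiv hF (c := fun x => b (r k • x))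
      (hb.comp (contDiff_const_smul (r k))) (b.hasCompactSupport.comp_smul (hr0 k))
    rw [this]
    congr 2
    ext x
    rw [fderiv_comp_smul]
    simp
  have hrx : ∀ x : EuclideanSpace ℝ (Fin n), Tendsto (fun k => r k • x) atTop (𝓝 0) := fun x => by
    simpa using hr.smul_const x
  have L1 : Tendsto (fun k => ∫ x, b (r k • x) * vdiv F x) atTop (𝓝 (∫ x, vdiv F x)) := by
    refine tendsto_integral_of_dominated_convergence (fun x => ‖vdiv F x‖) (fun k => ?_)
      hdiv.norm (fun k => ?_) ?_
    · exact (hb.continuous.comp (continuous_const_smul (r k))).aestronglyMeasurable.mul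
        hdiv.aestronglyMeasurable
    · refine ae_of_all _ fun x => ?_
      rw [norm_mul, Real.norm_of_nonneg b.nonneg]
      exact mul_le_of_le_one_left (norm_nonneg _) b.le_one
    · refine ae_of_all _ fun x => ?_
      have h := ((hb.continuous.tendsto 0).comp (hrx x)).mul_const (vdiv F x)
      simpa [hb0, Function.comp_def] using h
  have L2 : Tendsto (fun k => ∫ x, r k * fderiv ℝ b (r k • x) (F x)) atTop
      (𝓝 (∫ _ : EuclideanSpace ℝ (Fin n), (0 : ℝ))) := by
    refine tendsto_integral_of_dominated_convergence (fun x => C * ‖F x‖) (fun k => ?_)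
      (hFint.norm.const_mul C) (fun k => ?_) ?_
    · exact (continuous_const.mul (((hb.continuous_fderiv one_ne_zero).comp
        (continuous_const_smul (r k))).clm_apply hF.continuous)).aestronglyMeasurable
    · refine ae_of_all _ fun x => ?_
      rw [norm_mul]
      calc ‖r k‖ * ‖fderiv ℝ b (r k • x) (F x)‖ ≤ 1 * (C * ‖F x‖) := by
            gcongr
            · exact hr1 k
            · exact (ContinuousLinearMap.le_opNorm _ _).trans (by gcongr; exact hC _)
        _ = _ := one_mul _
    · refine ae_of_all _ fun x => ?_
      refine squeeze_zero_norm (a := fun k => r k * (C * ‖F x‖)) (fun k => ?_) ?_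
      · rw [norm_mul, Real.norm_of_nonneg (show 0 ≤ r k by positivity)]
        gcongr
        exact (ContinuousLinearMap.le_opNorm _ _).trans (by gcongr; exact hC _)
      · simpa using hr.mul_const (C * ‖F x‖)
  simp_rw [key] at L1
  have := tendsto_nhds_unique L1 L2.neg
  simpa using this

/-- Weighted Cauchy-Schwarz. -/
theorem weighted_cs {n : ℕ} {q : EuclideanSpace ℝ (Fin n) → ℝ} (hq : Continuous q)
    (hqpos : ∀ x, 0 < q x) {E : Type*} [NormedAddCommGroup E]
    {u v : EuclideanSpace ℝ (Fin n) → E}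
    (hu : Continuous u) (hv : Continuous v)
    (hu2 : Integrable (fun x => q x * ‖u x‖ ^ 2)) (hv2 : Integrable (fun x => q x * ‖v x‖ ^ 2)) :
    Integrable (fun x => q x * (‖u x‖ * ‖v x‖)) ∧
    ∫ x, q x * (‖u x‖ * ‖v x‖) ≤
      Real.sqrt (∫ x, q x * ‖u x‖ ^ 2) * Real.sqrt (∫ x, q x * ‖v x‖ ^ 2) := by
  have sq : ∀ (w : EuclideanSpace ℝ (Fin n) → E) x,
      (Real.sqrt (q x) * ‖w x‖) ^ 2 = q x * ‖w x‖ ^ 2 := fun w x => by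
    rw [mul_pow, Real.sq_sqrt (hqpos x).le]
  have mem : ∀ w : EuclideanSpace ℝ (Fin n) → E, Continuous w →
      Integrable (fun x => q x * ‖w x‖ ^ 2) → MemLp (fun x => Real.sqrt (q x) * ‖w x‖) 2 := by
    intro w hw hw2
    refine (memLp_two_iff_integrable_sq (hq.sqrt.mul hw.norm).aestronglyMeasurable).2 ?_
    exact hw2.congr (ae_of_all _ fun x => (sq w x).symm)
  have e : ∀ x, q x * (‖u x‖ * ‖v x‖) = (Real.sqrt (q x) * ‖u x‖) * (Real.sqrt (q x) * ‖v x‖) :=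
    fun x => by
      rw [mul_mul_mul_comm, Real.mul_self_sqrt (hqpos x).le]
  simp_rw [e]
  refine ⟨(mem u hu hu2).integrable_mul (mem v hv hv2), ?_⟩
  have := integral_mul_le_Lp_mul_Lq_of_nonneg (μ := (volume : Measure (EuclideanSpace ℝ (Fin n))))
    Real.HolderConjugate.two_two
    (f := fun x => Real.sqrt (q x) * ‖u x‖) (g := fun x => Real.sqrt (q x) * ‖v x‖)
    (ae_of_all _ fun x => by positivity) (ae_of_all _ fun x => by positivity)
    (by simpa using mem u hu hu2) (by simpa using mem v hv hv2)
  simpa only [Real.rpow_two, sq, ← Real.sqrt_eq_rpow] using this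

theorem continuous_gradient_log {n : ℕ} {p : EuclideanSpace ℝ (Fin n) → ℝ}
    (hp : ContDiff ℝ 1 p) (hpos : ∀ x, 0 < p x) :
    Continuous (gradient (fun y => Real.log (p y))) := by
  have h : ContDiff ℝ 1 (fun y => Real.log (p y)) := hp.log fun x => (hpos x).ne'
  exact (InnerProductSpace.toDual ℝ (EuclideanSpace ℝ (Fin n))).symm.continuous.comp
    (h.continuous_fderiv one_ne_zero)

theorem vdiv_smul_eq {n : ℕ} {q : EuclideanSpace ℝ (Fin n) → ℝ}
    {g : EuclideanSpace ℝ (Fin n) → EuclideanSpace ℝ (Fin n)}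
    (hq : ContDiff ℝ 1 q) (hpos : ∀ x, 0 < q x) (hg : ContDiff ℝ 1 g)
    (x : EuclideanSpace ℝ (Fin n)) :
    vdiv (fun x => q x • g x) x =
      q x * ⟪gradient (fun y => Real.log (q y)) x, g x⟫ + q x * vdiv g x := by
  have hqd := hq.differentiable one_ne_zero x
  have h1 : (((fderiv ℝ q x).smulRight (g x) : EuclideanSpace ℝ (Fin n) →L[ℝ]
      EuclideanSpace ℝ (Fin n)) : EuclideanSpace ℝ (Fin n) →ₗ[ℝ] EuclideanSpace ℝ (Fin n)) =
      ((fderiv ℝ q x : EuclideanSpace ℝ (Fin n) →ₗ[ℝ] ℝ)).smulRight (g x) := rfl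
  unfold vdiv
  rw [fderiv_fun_smul hqd (hg.differentiable one_ne_zero x), inner_gradient_left,
    fderiv.log hqd (hpos x).ne', ContinuousLinearMap.toLinearMap_add, map_add, h1,
    LinearMap.trace_smulRight]
  have := (hpos x).ne'
  simp
  field_simp
  ring

/-- If `p, q` are `C¹` strictly positive probability densities on `ℝⁿ` and `g : ℝⁿ → ℝⁿ` is `C¹`
with `q·g → 0` at infinity, `∇·(q g)` Lebesgue-integrable, `∫ q‖g‖² < ∞` and the Fisher
divergence `F(q‖p) = ∫ q ‖∇ log q − ∇ log p‖² < ∞`, then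
`|E_q[S_p g]| ≤ √(∫ q‖g‖²) · √(F(q‖p))`. -/
theorem abs_expectation_steinOp_le {n : ℕ}
    (p q : EuclideanSpace ℝ (Fin n) → ℝ)
    (g : EuclideanSpace ℝ (Fin n) → EuclideanSpace ℝ (Fin n))
    (hp : ContDiff ℝ 1 p) (hppos : ∀ x, 0 < p x) (hpnorm : ∫ x, p x = 1)
    (hq : ContDiff ℝ 1 q) (hqpos : ∀ x, 0 < q x) (hqnorm : ∫ x, q x = 1)
    (hg : ContDiff ℝ 1 g)
    (hdecay : Tendsto (fun x => q x • g x) (cocompact (EuclideanSpace ℝ (Fin n))) (𝓝 0))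
    (hdivint : Integrable (vdiv fun x => q x • g x))
    (hg2 : Integrable (fun x => q x * ‖g x‖ ^ 2))
    (hF : Integrable (fun x => q x *
      ‖gradient (fun y => Real.log (q y)) x - gradient (fun y => Real.log (p y)) x‖ ^ 2)) :
    |∫ x, q x * steinOp p g x|
      ≤ Real.sqrt (∫ x, q x * ‖g x‖ ^ 2) *
        Real.sqrt (∫ x, q x *
          ‖gradient (fun y => Real.log (q y)) x - gradient (fun y => Real.log (p y)) x‖ ^ 2) := by
  have hd : Continuous (fun x => gradient (fun y => Real.log (q y)) x -
      gradient (fun y => Real.log (p y)) x) :=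
    (continuous_gradient_log hq hqpos).sub (continuous_gradient_log hp hppos)
  have hqi : Integrable q := by
    by_contra h
    rw [integral_undef h] at hqnorm
    exact zero_ne_one hqnorm
  obtain ⟨i1, h1⟩ := weighted_cs hq.continuous hqpos hg.continuous hd hg2 hF
  have hFint : Integrable (fun x => q x • g x) := by
    refine (hqi.add hg2).mono' (hq.continuous.smul hg.continuous).aestronglyMeasurable
      (ae_of_all _ fun x => ?_)
    rw [norm_smul, Real.norm_of_nonneg (hqpos x).le]
    simp only [Pi.add_apply]
    nlinarith [hqpos x, mul_nonneg (hqpos x).le (sq_nonneg (‖g x‖ - 1)),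
      mul_nonneg (hqpos x).le (sq_nonneg (‖g x‖))]
  have hzero : ∫ x, vdiv (fun x => q x • g x) x = 0 :=
    integral_vdiv_eq_zero (hq.smul hg) hFint hdivint
  have hbd : ∀ x, ‖q x * ⟪gradient (fun y => Real.log (q y)) x -
      gradient (fun y => Real.log (p y)) x, g x⟫‖ ≤ q x * (‖g x‖ *
      ‖gradient (fun y => Real.log (q y)) x - gradient (fun y => Real.log (p y)) x‖) := fun x => by
    rw [norm_mul, Real.norm_of_nonneg (hqpos x).le, mul_comm ‖g x‖]
    exact mul_le_mul_of_nonneg_left (norm_inner_le_norm _ _) (hqpos x).le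
  have hi : Integrable (fun x => q x * ⟪gradient (fun y => Real.log (q y)) x -
      gradient (fun y => Real.log (p y)) x, g x⟫) :=
    i1.mono' (hq.continuous.mul (hd.inner hg.continuous)).aestronglyMeasurable
      (ae_of_all _ hbd)
  have e : ∀ x, q x * steinOp p g x = vdiv (fun x => q x • g x) x -
      q x * ⟪gradient (fun y => Real.log (q y)) x -
      gradient (fun y => Real.log (p y)) x, g x⟫ := fun x => by
    rw [vdiv_smul_eq hq hqpos hg, steinOp, inner_sub_left]
    ring
  simp_rw [e]
  rw [integral_sub hdivint hi, hzero, zero_sub, abs_neg, ← Real.norm_eq_abs]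
  exact (norm_integral_le_of_norm_le i1 (ae_of_all _ hbd)).trans h1
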